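/- arXiv:2403.14605 — 3 statements merged into one kernel-verified Lean document; each statement's English description precedes it below -/
import Mathlib

section
/- Reuse of steering controllers (Remark 1): let C be an N-step control sequence and let I = (μ_I, Σ_I) and G = (μ_G, Σ_G) be pairs of means and real symmetric positive semidefinite covariances such that I →_N^C G. Then for every pair I⁻ = (μ_I, Σ') with Σ' real symmetric positive semidefinite and Σ' ⪯ Σ_I, the same control sequence satisfies I⁻ →_N^C G. -/
open Matrix

/-- Largest eigenvalue of a real symmetric matrix (junk value `0` if not symmetric). -/
noncomputable def lamMax {n : ℕ} (M : Matrix (Fin n) (Fin n) ℝ) : ℝ :=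
  if h : M.IsHermitian then ⨆ i, h.eigenvalues i else 0

/-- Smallest eigenvalue of a real symmetric matrix (junk value `0` if not symmetric). -/
noncomputable def lamMin {n : ℕ} (M : Matrix (Fin n) (Fin n) ℝ) : ℝ :=
  if h : M.IsHermitian then ⨅ i, h.eigenvalues i else 0

/-- Covariance dynamics `Σ_{k+1} = (A + B K_k) Σ_k (A + B K_k)ᵀ + D Dᵀ`. -/
def covSeq {n m : ℕ} (A : Matrix (Fin n) (Fin n) ℝ) (B : Matrix (Fin n) (Fin m) ℝ)
    (D : Matrix (Fin n) (Fin n) ℝ) (K : ℕ → Matrix (Fin m) (Fin n) ℝ)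
    (S0 : Matrix (Fin n) (Fin n) ℝ) : ℕ → Matrix (Fin n) (Fin n) ℝ
  | 0 => S0
  | k + 1 => (A + B * K k) * covSeq A B D K S0 k * (A + B * K k)ᵀ + D * Dᵀ

/-- Mean dynamics `μ_{k+1} = A μ_k + B v_k`. -/
def meanSeq {n m : ℕ} (A : Matrix (Fin n) (Fin n) ℝ) (B : Matrix (Fin n) (Fin m) ℝ)
    (v : ℕ → Fin m → ℝ) (mu0 : Fin n → ℝ) : ℕ → Fin n → ℝ
  | 0 => mu0
  | k + 1 => A.mulVec (meanSeq A B v mu0 k) + B.mulVec (v k)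

/-- Perturbation propagators `γ_0 = I`, `γ_{k+1} = (A + B K_k) γ_k (A + B K_k)ᵀ`. -/
def gammaSeq {n m : ℕ} (A : Matrix (Fin n) (Fin n) ℝ) (B : Matrix (Fin n) (Fin m) ℝ)
    (K : ℕ → Matrix (Fin m) (Fin n) ℝ) : ℕ → Matrix (Fin n) (Fin n) ℝ
  | 0 => 1
  | k + 1 => (A + B * K k) * gammaSeq A B K k * (A + B * K k)ᵀ

/-- A planning scene: state/control constraint data `α_x, β_x, c_x, α_u, β_u, c_u`
with `c_x, c_u ≥ 0`. -/
structure Scene (n m : ℕ) where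
  ax : Fin n → ℝ
  au : Fin m → ℝ
  bx : ℝ
  bu : ℝ
  cx : ℝ
  cu : ℝ
  cx_nonneg : 0 ≤ cx
  cu_nonneg : 0 ≤ cu

/-- `Steers A B D sc N K v μp Sp μq Sq` means `(μp, Sp) →_N^{(K, v)} (μq, Sq)`:
the mean and covariance trajectories initialized at `(μp, Sp)` and driven by the
control sequence `(K, v)` satisfy the state and control chance constraints for
`k = 0, …, N-1`, the terminal mean constraint `μ_N = μq`, and the terminal
covariance constraint `λ_max(Σ_N) ≤ λ_min(Σ_q)`. -/
def Steers {n m : ℕ} (A : Matrix (Fin n) (Fin n) ℝ) (B : Matrix (Fin n) (Fin m) ℝ)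
    (D : Matrix (Fin n) (Fin n) ℝ) (sc : Scene n m) (N : ℕ)
    (K : ℕ → Matrix (Fin m) (Fin n) ℝ) (v : ℕ → Fin m → ℝ)
    (μp : Fin n → ℝ) (Sp : Matrix (Fin n) (Fin n) ℝ)
    (μq : Fin n → ℝ) (Sq : Matrix (Fin n) (Fin n) ℝ) : Prop :=
  (∀ k < N, sc.cx * Real.sqrt (sc.ax ⬝ᵥ (covSeq A B D K Sp k).mulVec sc.ax)
      + sc.ax ⬝ᵥ meanSeq A B v μp k ≤ sc.bx) ∧
  (∀ k < N, sc.cu * Real.sqrt (sc.au ⬝ᵥ (K k * covSeq A B D K Sp k * (K k)ᵀ).mulVec sc.au)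
      + sc.au ⬝ᵥ v k ≤ sc.bu) ∧
  meanSeq A B v μp N = μq ∧
  lamMax (covSeq A B D K Sp N) ≤ lamMin Sq

/-- Concatenation of two (time-indexed) sequences: the first for steps `0,…,N-1`,
then the second, shifted by `N`. -/
def concatSeq {α : Type*} (N : ℕ) (f g : ℕ → α) : ℕ → α :=
  fun k => if k < N then f k else g (k - N)

/-- Concatenation of `d` sequences with lengths `Ns i`, applied consecutively. -/
def multiConcat {α : Type*} [Zero α] : (d : ℕ) → (Fin d → ℕ) → (Fin d → ℕ → α) → ℕ → α
  | 0, _, _ => fun _ => 0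
  | d + 1, Ns, fs =>
      concatSeq (Ns 0) (fs 0) (multiConcat d (fun i => Ns i.succ) (fun i => fs i.succ))

/-- `h`-hop backward reachable set of the distribution `(μ, S)`: all pairs
`(μ_q, Σ_q)` with `Σ_q` positive semidefinite from which some `h*N`-step control
sequence steers to `(μ, S)`. -/
def BRS {n m : ℕ} (A : Matrix (Fin n) (Fin n) ℝ) (B : Matrix (Fin n) (Fin m) ℝ)
    (D : Matrix (Fin n) (Fin n) ℝ) (sc : Scene n m) (h N : ℕ)
    (μ : Fin n → ℝ) (S : Matrix (Fin n) (Fin n) ℝ) :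
    Set ((Fin n → ℝ) × Matrix (Fin n) (Fin n) ℝ) :=
  { p | p.2.PosSemidef ∧
      ∃ (K : ℕ → Matrix (Fin m) (Fin n) ℝ) (v : ℕ → Fin m → ℝ),
        Steers A B D sc (h * N) K v p.1 p.2 μ S }

/-!
Covariance propagation `Σ ↦ M Σ Mᵀ + D Dᵀ` is monotone for the Loewner order and the mean does not
depend on the covariance, so a smaller initial covariance stays below the original one at every
step while the mean trajectory is unchanged. Each covariance enters the constraints only through
`√(αᵀ Σ α)` with a nonnegative coefficient, or through `λ_max(Σ)`, and both are monotone in `Σ`: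
for the latter, `λ_max(Σ) ≤ c` says exactly that `Σ ⪯ c I`.
-/

section LoewnerOrder

open scoped ComplexOrder MatrixOrder

variable {𝕜 ι κ : Type*} [RCLike 𝕜] [Fintype ι]

lemma dotProduct_mulVec_le_dotProduct_mulVec {S T : Matrix ι ι 𝕜} (h : S ≤ T) (x : ι → 𝕜) :
    star x ⬝ᵥ S *ᵥ x ≤ star x ⬝ᵥ T *ᵥ x := by
  have h_nonneg := (le_iff.mp h).dotProduct_mulVec_nonneg x
  rwa [sub_mulVec, dotProduct_sub, sub_nonneg] at h_nonneg

lemma mul_mul_conjTranspose_le_mul_mul_conjTranspose [Finite κ] {S T : Matrix ι ι 𝕜}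
    (h : S ≤ T) (M : Matrix κ ι 𝕜) : M * S * Mᴴ ≤ M * T * Mᴴ := by
  rw [le_iff, ← Matrix.sub_mul, ← Matrix.mul_sub]
  exact (le_iff.mp h).mul_mul_conjTranspose_same M

lemma mul_mul_transpose_le_mul_mul_transpose [Finite κ] {S T : Matrix ι ι ℝ} (h : S ≤ T)
    (M : Matrix κ ι ℝ) : M * S * Mᵀ ≤ M * T * Mᵀ := by
  simpa only [conjTranspose_eq_transpose_of_trivial] using
    mul_mul_conjTranspose_le_mul_mul_conjTranspose h M

end LoewnerOrder

section LargestEigenvalue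

open scoped MatrixOrder

variable {n : ℕ} {S T : Matrix (Fin n) (Fin n) ℝ}

lemma lamMax_le_iff [NeZero n] (hS : S.IsHermitian) {c : ℝ} :
    lamMax S ≤ c ↔ S ≤ algebraMap ℝ (Matrix (Fin n) (Fin n) ℝ) c := by
  rw [le_algebraMap_iff_spectrum_le hS.isSelfAdjoint, hS.spectrum_real_eq_range_eigenvalues,
    Set.forall_mem_range, lamMax, dif_pos hS, ciSup_le_iff (Set.finite_range _).bddAbove]

lemma lamMax_le_lamMax (hS : S.IsHermitian) (h : S ≤ T) : lamMax S ≤ lamMax T := by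
  rcases eq_zero_or_neZero n with rfl | _
  · rw [Subsingleton.elim S T]
  · have hT : T.IsHermitian := hS.isSelfAdjoint.of_ge h
    exact (lamMax_le_iff hS).mpr (h.trans ((lamMax_le_iff hT).mp le_rfl))

end LargestEigenvalue

section ChanceConstraint

open scoped MatrixOrder

variable {ι : Type*} [Fintype ι]

/-- Deterministic form of the Gaussian chance constraint `P(αᵀ x ≤ β) ≥ 1 - ε` for
`x ~ N(μ, S)`, with `c` in the role of `Φ⁻¹(1 - ε)`. Both the state and the control constraints of
`Steers` have this form. -/
def ChanceConstraint (c : ℝ) (α : ι → ℝ) (β : ℝ) (μ : ι → ℝ) (S : Matrix ι ι ℝ) : Prop :=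
  c * √(α ⬝ᵥ S *ᵥ α) + α ⬝ᵥ μ ≤ β

lemma ChanceConstraint.of_le {c β : ℝ} {α μ : ι → ℝ} {S T : Matrix ι ι ℝ} (hc : 0 ≤ c)
    (hT : ChanceConstraint c α β μ T) (h : S ≤ T) : ChanceConstraint c α β μ S := by
  have h_var : α ⬝ᵥ S *ᵥ α ≤ α ⬝ᵥ T *ᵥ α := by
    simpa only [star_trivial] using dotProduct_mulVec_le_dotProduct_mulVec h α
  calc c * √(α ⬝ᵥ S *ᵥ α) + α ⬝ᵥ μ
      ≤ c * √(α ⬝ᵥ T *ᵥ α) + α ⬝ᵥ μ := by gcongr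
    _ ≤ β := hT

end ChanceConstraint

section CovarianceDynamics

open scoped MatrixOrder

variable {n m : ℕ} (A : Matrix (Fin n) (Fin n) ℝ) (B : Matrix (Fin n) (Fin m) ℝ)
  (D : Matrix (Fin n) (Fin n) ℝ) (K : ℕ → Matrix (Fin m) (Fin n) ℝ)

lemma covSeq_posSemidef {S : Matrix (Fin n) (Fin n) ℝ} (hS : S.PosSemidef) (k : ℕ) :
    (covSeq A B D K S k).PosSemidef := by
  induction k with
  | zero => exact hS
  | succ k ih =>
    simpa only [covSeq, conjTranspose_eq_transpose_of_trivial] using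
      (ih.mul_mul_conjTranspose_same (A + B * K k)).add (posSemidef_self_mul_conjTranspose D)

lemma covSeq_monotone (k : ℕ) : Monotone fun S => covSeq A B D K S k := by
  intro S T h
  induction k with
  | zero => exact h
  | succ k ih => exact add_le_add_left (mul_mul_transpose_le_mul_mul_transpose ih _) _

end CovarianceDynamics

/-- Remark 1, Reuse: a control sequence steering `(μ_I, Σ_I)` to `G`
also steers `(μ_I, Σ')` to `G` whenever `Σ' ⪯ Σ_I`. -/
theorem steers_reuse {n m : ℕ}
    (A : Matrix (Fin n) (Fin n) ℝ) (B : Matrix (Fin n) (Fin m) ℝ)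
    (D : Matrix (Fin n) (Fin n) ℝ) (sc : Scene n m) (N : ℕ)
    (K : ℕ → Matrix (Fin m) (Fin n) ℝ) (v : ℕ → Fin m → ℝ)
    (μI : Fin n → ℝ) (SI : Matrix (Fin n) (Fin n) ℝ)
    (μG : Fin n → ℝ) (SG : Matrix (Fin n) (Fin n) ℝ)
    (hSI : SI.PosSemidef) (hSG : SG.PosSemidef)
    (hsteer : Steers A B D sc N K v μI SI μG SG) :
    ∀ S' : Matrix (Fin n) (Fin n) ℝ, S'.PosSemidef → (SI - S').PosSemidef →
      Steers A B D sc N K v μI S' μG SG := by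
  intro S' hS' hle
  obtain ⟨h_state, h_control, h_mean, h_cov⟩ := hsteer
  have h_covSeq := fun k => covSeq_monotone A B D K k hle
  refine ⟨fun k hk => ?state, fun k hk => ?control, h_mean, ?terminal⟩
  case state => exact ChanceConstraint.of_le sc.cx_nonneg (h_state k hk) (h_covSeq k)
  case control =>
    exact ChanceConstraint.of_le sc.cu_nonneg (h_control k hk)
      (mul_mul_transpose_le_mul_mul_transpose (h_covSeq k) (K k))
  case terminal =>
    have hN : (covSeq A B D K S' N).IsHermitian := (covSeq_posSemidef A B D K hS' N).isHermitian
    exact (lamMax_le_lamMax hN (h_covSeq N)).trans h_cov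
end

section
/- Feasibility through sequential composition (Lemma 1): let p_i = (μ_i, Σ_i), p_j = (μ_j, Σ_j), p_k = (μ_k, Σ_k) be pairs of means and real symmetric positive semidefinite covariances, let C_{i,j} be an N_{i,j}-step control sequence with p_i →_{N_{i,j}}^{C_{i,j}} p_j, and let C_{j,k} be an N_{j,k}-step control sequence with p_j →_{N_{j,k}}^{C_{j,k}} p_k. Then the concatenated (N_{i,j}+N_{j,k})-step control sequence C_{i,k} = C_{i,j} ∪ C_{j,k} (which applies C_{i,j} for the first N_{i,j} steps and then C_{j,k}) satisfies p_i →_{N_{i,j}+N_{j,k}}^{C_{i,k}} p_k. -/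
open Matrix

/-!
The dynamics have the semigroup property, so the concatenated sequence steers to `p_k` as soon as
`C_{j,k}` steers the distribution `(μ_j, Σ_N)` actually reached after `C_{i,j}`, rather than the
prescribed `(μ_j, Σ_j)`. The terminal condition gives `Σ_N ≤ λ_max(Σ_N) I ≤ λ_min(Σ_j) I ≤ Σ_j` in
the Loewner order. The covariance recursion is monotone in its initial value for this order, and so
are the variances in the chance constraints and `λ_max`, so starting from the smaller covariance
`Σ_N` can only relax every constraint.
-/

open scoped MatrixOrder ComplexOrder

section Loewner

variable {ι κ 𝕜 : Type*} [Fintype ι] [Finite κ] [RCLike 𝕜] {M S : Matrix ι ι 𝕜}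

theorem mul_mul_conjTranspose_mono (h : M ≤ S) (F : Matrix κ ι 𝕜) :
    F * M * Fᴴ ≤ F * S * Fᴴ := by
  rw [Matrix.le_iff, ← Matrix.sub_mul, ← Matrix.mul_sub]
  exact (Matrix.le_iff.mp h).mul_mul_conjTranspose_same F

theorem star_dotProduct_mulVec_mono (h : M ≤ S) (x : ι → 𝕜) :
    star x ⬝ᵥ M *ᵥ x ≤ star x ⬝ᵥ S *ᵥ x := by
  rw [← sub_nonneg, ← dotProduct_sub, ← Matrix.sub_mulVec]
  exact (Matrix.le_iff.mp h).dotProduct_mulVec_nonneg x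

variable [DecidableEq ι]

theorem le_algebraMap_iff_eigenvalues_le (hM : M.IsHermitian) {c : ℝ} :
    M ≤ algebraMap ℝ (Matrix ι ι 𝕜) c ↔ ∀ i, hM.eigenvalues i ≤ c := by
  rw [le_algebraMap_iff_spectrum_le hM, hM.spectrum_real_eq_range_eigenvalues,
    Set.forall_mem_range]

theorem algebraMap_le_iff_le_eigenvalues (hM : M.IsHermitian) {c : ℝ} :
    algebraMap ℝ (Matrix ι ι 𝕜) c ≤ M ↔ ∀ i, c ≤ hM.eigenvalues i := by
  rw [algebraMap_le_iff_le_spectrum hM, hM.spectrum_real_eq_range_eigenvalues,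
    Set.forall_mem_range]

end Loewner

section ExtremalEigenvalues

variable {n : ℕ} {M S : Matrix (Fin n) (Fin n) ℝ}

theorem eigenvalues_le_lamMax (hM : M.IsHermitian) (i : Fin n) :
    hM.eigenvalues i ≤ lamMax M := by
  rw [lamMax, dif_pos hM]
  exact le_ciSup (Set.finite_range _).bddAbove i

theorem lamMin_le_eigenvalues (hM : M.IsHermitian) (i : Fin n) :
    lamMin M ≤ hM.eigenvalues i := by
  rw [lamMin, dif_pos hM]
  exact ciInf_le (Set.finite_range _).bddBelow i

theorem le_of_lamMax_le_lamMin (hM : M.IsHermitian) (hS : S.IsHermitian)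
    (h : lamMax M ≤ lamMin S) : M ≤ S :=
  calc
    M ≤ algebraMap ℝ _ (lamMin S) :=
      (le_algebraMap_iff_eigenvalues_le hM).mpr fun i => (eigenvalues_le_lamMax hM i).trans h
    _ ≤ S := (algebraMap_le_iff_le_eigenvalues hS).mpr (lamMin_le_eigenvalues hS)

theorem lamMax_mono (hM : M.IsHermitian) (h : M ≤ S) : lamMax M ≤ lamMax S := by
  have hS : S.IsHermitian := by simpa using (Matrix.le_iff.mp h).isHermitian.add hM
  have hle : M ≤ algebraMap ℝ _ (lamMax S) :=
    h.trans ((le_algebraMap_iff_eigenvalues_le hS).mpr (eigenvalues_le_lamMax hS))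
  rcases isEmpty_or_nonempty (Fin n) with _ | _
  · rw [Subsingleton.elim M S]
  · rw [lamMax, dif_pos hM]
    exact ciSup_le ((le_algebraMap_iff_eigenvalues_le hM).mp hle)

end ExtremalEigenvalues

theorem forall_lt_add_iff {P : ℕ → Prop} {N N' : ℕ} :
    (∀ k < N + N', P k) ↔ (∀ k < N, P k) ∧ ∀ k < N', P (N + k) := by
  refine ⟨fun h => ⟨fun k hk => h k (by lia), fun k hk => h (N + k) (by lia)⟩,
    fun ⟨hfirst, hsecond⟩ k hk => ?_⟩
  rcases lt_or_ge k N with hlt | hge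
  · exact hfirst k hlt
  · obtain ⟨l, rfl⟩ := Nat.exists_eq_add_of_le hge
    exact hsecond l (by lia)

section ConcatSeq

variable {α : Type*} {f g : ℕ → α} {N k : ℕ}

theorem concatSeq_of_lt (hk : k < N) : concatSeq N f g k = f k :=
  if_pos hk

theorem concatSeq_add : concatSeq N f g (N + k) = g k := by
  simp [concatSeq]

end ConcatSeq

section Dynamics

variable {n m : ℕ} {A : Matrix (Fin n) (Fin n) ℝ} {B : Matrix (Fin n) (Fin m) ℝ}
  {D : Matrix (Fin n) (Fin n) ℝ} {K K' : ℕ → Matrix (Fin m) (Fin n) ℝ} {v v' : ℕ → Fin m → ℝ}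
  {μ : Fin n → ℝ} {M S : Matrix (Fin n) (Fin n) ℝ}

theorem covSeq_isHermitian (hS : S.IsHermitian) (k : ℕ) : (covSeq A B D K S k).IsHermitian := by
  induction k with
  | zero => exact hS
  | succ k ih =>
    simpa [covSeq] using (isHermitian_mul_mul_conjTranspose (A + B * K k) ih).add
      (isHermitian_mul_conjTranspose_self D)

theorem covSeq_mono (h : M ≤ S) (k : ℕ) : covSeq A B D K M k ≤ covSeq A B D K S k := by
  induction k with
  | zero => exact h
  | succ k ih => exact add_le_add_left (mul_mul_conjTranspose_mono ih (A + B * K k)) (D * Dᵀ)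

theorem covSeq_add (N k : ℕ) :
    covSeq A B D K S (N + k) = covSeq A B D (fun j => K (N + j)) (covSeq A B D K S N) k := by
  induction k with
  | zero => rfl
  | succ k ih => rw [← Nat.add_assoc, covSeq, covSeq, ih]

theorem meanSeq_add (N k : ℕ) :
    meanSeq A B v μ (N + k) = meanSeq A B (fun j => v (N + j)) (meanSeq A B v μ N) k := by
  induction k with
  | zero => rfl
  | succ k ih => rw [← Nat.add_assoc, meanSeq, meanSeq, ih]

variable {N k : ℕ}

theorem covSeq_congr (h : ∀ j < k, K j = K' j) :
    covSeq A B D K S k = covSeq A B D K' S k := by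
  induction k with
  | zero => rfl
  | succ k ih =>
    rw [covSeq, covSeq, h k k.lt_succ_self, ih fun j hj => h j (hj.trans k.lt_succ_self)]

theorem meanSeq_congr (h : ∀ j < k, v j = v' j) : meanSeq A B v μ k = meanSeq A B v' μ k := by
  induction k with
  | zero => rfl
  | succ k ih =>
    rw [meanSeq, meanSeq, h k k.lt_succ_self, ih fun j hj => h j (hj.trans k.lt_succ_self)]

theorem covSeq_concatSeq_of_le (hk : k ≤ N) :
    covSeq A B D (concatSeq N K K') S k = covSeq A B D K S k :=
  covSeq_congr fun _ hj => concatSeq_of_lt (hj.trans_le hk)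

theorem meanSeq_concatSeq_of_le (hk : k ≤ N) :
    meanSeq A B (concatSeq N v v') μ k = meanSeq A B v μ k :=
  meanSeq_congr fun _ hj => concatSeq_of_lt (hj.trans_le hk)

theorem covSeq_concatSeq_add :
    covSeq A B D (concatSeq N K K') S (N + k) = covSeq A B D K' (covSeq A B D K S N) k := by
  rw [covSeq_add, covSeq_concatSeq_of_le le_rfl]
  exact covSeq_congr fun _ _ => concatSeq_add

theorem meanSeq_concatSeq_add :
    meanSeq A B (concatSeq N v v') μ (N + k) = meanSeq A B v' (meanSeq A B v μ N) k := by
  rw [meanSeq_add, meanSeq_concatSeq_of_le le_rfl]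
  exact meanSeq_congr fun _ _ => concatSeq_add

end Dynamics

section Steering

variable {n m : ℕ} {A : Matrix (Fin n) (Fin n) ℝ} {B : Matrix (Fin n) (Fin m) ℝ}
  {D : Matrix (Fin n) (Fin n) ℝ} {sc : Scene n m} {K K' : ℕ → Matrix (Fin m) (Fin n) ℝ}
  {v v' : ℕ → Fin m → ℝ} {μ ν : Fin n → ℝ} {M S T : Matrix (Fin n) (Fin n) ℝ} {N N' : ℕ}

/-- The state and control chance constraints at a single step, for a state of mean `μ` and
covariance `S` controlled by the gain `F` and the feedforward term `w`. The chance constraints in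
`Steers` ask for this along the trajectory; see `steers_iff`. -/
def Scene.Admissible (sc : Scene n m) (F : Matrix (Fin m) (Fin n) ℝ) (w : Fin m → ℝ)
    (μ : Fin n → ℝ) (S : Matrix (Fin n) (Fin n) ℝ) : Prop :=
  sc.cx * √(sc.ax ⬝ᵥ S *ᵥ sc.ax) + sc.ax ⬝ᵥ μ ≤ sc.bx ∧
    sc.cu * √(sc.au ⬝ᵥ (F * S * Fᵀ) *ᵥ sc.au) + sc.au ⬝ᵥ w ≤ sc.bu

theorem Scene.Admissible.of_cov_le {F : Matrix (Fin m) (Fin n) ℝ} {w : Fin m → ℝ}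
    (h : sc.Admissible F w μ S) (hMS : M ≤ S) : sc.Admissible F w μ M := by
  have hx : sc.ax ⬝ᵥ M *ᵥ sc.ax ≤ sc.ax ⬝ᵥ S *ᵥ sc.ax := star_dotProduct_mulVec_mono hMS sc.ax
  have hu : sc.au ⬝ᵥ (F * M * Fᵀ) *ᵥ sc.au ≤ sc.au ⬝ᵥ (F * S * Fᵀ) *ᵥ sc.au :=
    star_dotProduct_mulVec_mono (mul_mul_conjTranspose_mono hMS F) sc.au
  have hcx := sc.cx_nonneg
  have hcu := sc.cu_nonneg
  exact ⟨le_trans (by gcongr) h.1, le_trans (by gcongr) h.2⟩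

theorem steers_iff :
    Steers A B D sc N K v μ S ν T ↔
      (∀ k < N, sc.Admissible (K k) (v k) (meanSeq A B v μ k) (covSeq A B D K S k)) ∧
        meanSeq A B v μ N = ν ∧ lamMax (covSeq A B D K S N) ≤ lamMin T := by
  simp only [Steers, Scene.Admissible, forall_and, and_assoc]

theorem Steers.of_cov_le (h : Steers A B D sc N K v μ S ν T) (hM : M.IsHermitian)
    (hMS : M ≤ S) : Steers A B D sc N K v μ M ν T := by
  rw [steers_iff] at h ⊢
  obtain ⟨hadm, hmean, hcov⟩ := h
  exact ⟨fun k hk => (hadm k hk).of_cov_le (covSeq_mono hMS k), hmean,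
    (lamMax_mono (covSeq_isHermitian hM N) (covSeq_mono hMS N)).trans hcov⟩

theorem steers_add_concatSeq_iff :
    Steers A B D sc (N + N') (concatSeq N K K') (concatSeq N v v') μ S ν T ↔
      (∀ k < N, sc.Admissible (K k) (v k) (meanSeq A B v μ k) (covSeq A B D K S k)) ∧
        Steers A B D sc N' K' v' (meanSeq A B v μ N) (covSeq A B D K S N) ν T := by
  have hfirst {k : ℕ} (hk : k < N) :
      sc.Admissible (concatSeq N K K' k) (concatSeq N v v' k)
          (meanSeq A B (concatSeq N v v') μ k) (covSeq A B D (concatSeq N K K') S k) ↔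
        sc.Admissible (K k) (v k) (meanSeq A B v μ k) (covSeq A B D K S k) := by
    rw [concatSeq_of_lt hk, concatSeq_of_lt hk, meanSeq_concatSeq_of_le hk.le,
      covSeq_concatSeq_of_le hk.le]
  rw [steers_iff, steers_iff, forall_lt_add_iff, forall₂_congr fun _ => hfirst]
  simp only [concatSeq_add, meanSeq_concatSeq_add, covSeq_concatSeq_add, and_assoc]

end Steering

/-- Lemma 1, Feasibility through Sequential Composition. -/
theorem steers_concat {n m : ℕ}
    (A : Matrix (Fin n) (Fin n) ℝ) (B : Matrix (Fin n) (Fin m) ℝ)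
    (D : Matrix (Fin n) (Fin n) ℝ) (sc : Scene n m)
    (μi : Fin n → ℝ) (Si : Matrix (Fin n) (Fin n) ℝ)
    (μj : Fin n → ℝ) (Sj : Matrix (Fin n) (Fin n) ℝ)
    (μk : Fin n → ℝ) (Sk : Matrix (Fin n) (Fin n) ℝ)
    (hSi : Si.PosSemidef) (hSj : Sj.PosSemidef) (hSk : Sk.PosSemidef)
    (Nij Njk : ℕ)
    (Kij : ℕ → Matrix (Fin m) (Fin n) ℝ) (vij : ℕ → Fin m → ℝ)
    (Kjk : ℕ → Matrix (Fin m) (Fin n) ℝ) (vjk : ℕ → Fin m → ℝ)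
    (hij : Steers A B D sc Nij Kij vij μi Si μj Sj)
    (hjk : Steers A B D sc Njk Kjk vjk μj Sj μk Sk) :
    Steers A B D sc (Nij + Njk) (concatSeq Nij Kij Kjk) (concatSeq Nij vij vjk)
      μi Si μk Sk := by
  obtain ⟨hadm, rfl, hcov⟩ := steers_iff.mp hij
  have hherm : (covSeq A B D Kij Si Nij).IsHermitian := covSeq_isHermitian hSi.isHermitian Nij
  have hle : covSeq A B D Kij Si Nij ≤ Sj := le_of_lamMax_le_lamMin hherm hSj.isHermitian hcov
  exact steers_add_concatSeq_iff.mpr ⟨hadm, hjk.of_cov_le hherm hle⟩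
end

section
/- One-step strict Loewner decrease under gain scaling (equations (31)–(33)): let Σ be a real symmetric positive semidefinite n×n matrix, K ∈ ℝ^{m×n} a feedback gain, and set S = (BK) Σ (BK)^T and M = (BK) Σ (A + BK)^T + (A + BK) Σ (BK)^T. If λ_0 > 0 satisfies λ_0 λ_max(S) < λ_min(M), then (A + (1 − λ_0) BK) Σ (A + (1 − λ_0) BK)^T + D D^T ≺ (A + BK) Σ (A + BK)^T + D D^T, i.e. the difference is positive definite. -/
open Matrix

/-!
With `X = A + B K` and `Y = B K`, scaling the gain by `1 - c` replaces `X` by `X - c Y`, and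
expanding gives `X Σ Xᵀ - (X - c Y) Σ (X - c Y)ᵀ = c (N - c M)` with `M = Y Σ Yᵀ` and
`N = Y Σ Xᵀ + X Σ Yᵀ`. In the Loewner order `N - c M ≥ (λ_min(N) - c λ_max(M)) I`, and the scalar
on the right is positive.
-/

section LoewnerBounds

open scoped ComplexOrder MatrixOrder

section RCLike

variable {ι 𝕜 : Type*} [Fintype ι] [DecidableEq ι] [RCLike 𝕜] {M N : Matrix ι ι 𝕜}

theorem algebraMap_le_iff_forall_le_eigenvalues (hM : M.IsHermitian) {r : ℝ} :
    algebraMap ℝ (Matrix ι ι 𝕜) r ≤ M ↔ ∀ i, r ≤ hM.eigenvalues i := by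
  rw [algebraMap_le_iff_le_spectrum hM, hM.spectrum_real_eq_range_eigenvalues,
    Set.forall_mem_range]

theorem le_algebraMap_iff_forall_eigenvalues_le (hM : M.IsHermitian) {r : ℝ} :
    M ≤ algebraMap ℝ (Matrix ι ι 𝕜) r ↔ ∀ i, hM.eigenvalues i ≤ r := by
  rw [le_algebraMap_iff_spectrum_le hM, hM.spectrum_real_eq_range_eigenvalues,
    Set.forall_mem_range]

theorem posDef_sub_smul_of_le_algebraMap {a b c : ℝ} (hM : M ≤ algebraMap ℝ (Matrix ι ι 𝕜) a)
    (hN : algebraMap ℝ (Matrix ι ι 𝕜) b ≤ N) (hc : 0 ≤ c) (h : c * a < b) :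
    (N - c • M).PosDef := by
  have gap_posDef : ((b - c * a) • (1 : Matrix ι ι 𝕜)).PosDef := PosDef.one.smul (sub_pos.2 h)
  have gap_add_slack : N - c • M = (b - c * a) • (1 : Matrix ι ι 𝕜)
      + ((N - algebraMap ℝ _ b) + c • (algebraMap ℝ _ a - M)) := by
    simp only [Algebra.algebraMap_eq_smul_one]
    module
  rw [gap_add_slack]
  exact gap_posDef.add_posSemidef ((le_iff.mp hN).add ((le_iff.mp hM).smul hc))

end RCLike

variable {n : ℕ} {M N : Matrix (Fin n) (Fin n) ℝ}

theorem algebraMap_lamMin_le (hM : M.IsHermitian) : algebraMap ℝ _ (lamMin M) ≤ M := by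
  rw [algebraMap_le_iff_forall_le_eigenvalues hM, lamMin, dif_pos hM]
  exact ciInf_le (Set.finite_range _).bddBelow

theorem le_algebraMap_lamMax (hM : M.IsHermitian) : M ≤ algebraMap ℝ _ (lamMax M) := by
  rw [le_algebraMap_iff_forall_eigenvalues_le hM, lamMax, dif_pos hM]
  exact le_ciSup (Set.finite_range _).bddAbove

theorem posDef_sub_smul_of_mul_lamMax_lt_lamMin (hM : M.IsHermitian) (hN : N.IsHermitian) {c : ℝ}
    (hc : 0 ≤ c) (h : c * lamMax M < lamMin N) : (N - c • M).PosDef :=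
  posDef_sub_smul_of_le_algebraMap (le_algebraMap_lamMax hM) (algebraMap_lamMin_le hN) hc h

end LoewnerBounds

section Congruence

variable {ι κ R : Type*} [Fintype κ]

theorem isSymm_mul_mul_transpose [NonUnitalCommSemiring R] {S : Matrix κ κ R} (hS : S.IsSymm)
    (X : Matrix ι κ R) : (X * S * Xᵀ).IsSymm := by
  simp only [IsSymm, transpose_mul, transpose_transpose, hS.eq, Matrix.mul_assoc]

theorem isSymm_mul_mul_transpose_add_swap [NonUnitalCommSemiring R] {S : Matrix κ κ R}
    (hS : S.IsSymm) (X Y : Matrix ι κ R) : (Y * S * Xᵀ + X * S * Yᵀ).IsSymm := by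
  have swap : X * S * Yᵀ = (Y * S * Xᵀ)ᵀ := by
    simp only [transpose_mul, transpose_transpose, hS.eq, Matrix.mul_assoc]
  rw [swap]
  exact isSymm_add_transpose_self _

theorem mul_mul_transpose_sub_sub_smul [CommRing R] (S : Matrix κ κ R) (X Y : Matrix ι κ R)
    (c : R) :
    X * S * Xᵀ - (X - c • Y) * S * (X - c • Y)ᵀ
      = c • (Y * S * Xᵀ + X * S * Yᵀ - c • (Y * S * Yᵀ)) := by
  simp only [transpose_sub, transpose_smul, Matrix.sub_mul, Matrix.mul_sub, Matrix.smul_mul,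
    Matrix.mul_smul]
  module

end Congruence

theorem one_step_strict_loewner_decrease_general {n : ℕ} {ι κ ν : Type*} [Fintype ι] [Fintype κ]
    [Fintype ν] (A : Matrix (Fin n) ι ℝ) (B : Matrix (Fin n) κ ℝ) (D : Matrix (Fin n) ν ℝ)
    (S : Matrix ι ι ℝ) (hS : S.IsSymm) (K : Matrix κ ι ℝ) (lam0 : ℝ) (hlam0 : 0 < lam0)
    (hcond : lam0 * lamMax ((B * K) * S * (B * K)ᵀ)
        < lamMin ((B * K) * S * (A + B * K)ᵀ + (A + B * K) * S * (B * K)ᵀ)) :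
    (((A + B * K) * S * (A + B * K)ᵀ + D * Dᵀ)
      - ((A + (1 - lam0) • (B * K)) * S * (A + (1 - lam0) • (B * K))ᵀ + D * Dᵀ)).PosDef := by
  have scaled_gain : A + (1 - lam0) • (B * K) = (A + B * K) - lam0 • (B * K) := by module
  rw [add_sub_add_right_eq_sub, scaled_gain, mul_mul_transpose_sub_sub_smul]
  exact (posDef_sub_smul_of_mul_lamMax_lt_lamMin
    (isHermitian_iff_isSymm.mpr (isSymm_mul_mul_transpose hS _))
    (isHermitian_iff_isSymm.mpr (isSymm_mul_mul_transpose_add_swap hS _ _)) hlam0.le hcond).smul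
    hlam0

/-- equations (31)–(33): one-step strict Loewner decrease under
gain scaling. -/
theorem one_step_strict_loewner_decrease {n m : ℕ}
    (A : Matrix (Fin n) (Fin n) ℝ) (B : Matrix (Fin n) (Fin m) ℝ)
    (D : Matrix (Fin n) (Fin n) ℝ)
    (S : Matrix (Fin n) (Fin n) ℝ) (hS : S.PosSemidef)
    (K : Matrix (Fin m) (Fin n) ℝ) (lam0 : ℝ) (hlam0 : 0 < lam0)
    (hcond : lam0 * lamMax ((B * K) * S * (B * K)ᵀ)
        < lamMin ((B * K) * S * (A + B * K)ᵀ + (A + B * K) * S * (B * K)ᵀ)) :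
    (((A + B * K) * S * (A + B * K)ᵀ + D * Dᵀ)
      - ((A + (1 - lam0) • (B * K)) * S * (A + (1 - lam0) • (B * K))ᵀ + D * Dᵀ)).PosDef :=
  one_step_strict_loewner_decrease_general A B D S
    (isHermitian_iff_isSymm.mp hS.isHermitian) K lam0 hlam0 hcond
end
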